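/- arXiv:1606.06935 — 2 statements merged into one kernel-verified Lean document; each statement's English description precedes it below -/
import Mathlib

section
/- For every n ≥ 1: M_r(4n) ≥ 2M_r(n) + 2, M_r(4n+1) ≥ 2M_r(n) + 1, M_r(4n+2) ≥ M_r(n) + M_r(n+1) + 1, and M_r(4n+3) ≥ 2M_r(n+1) + 1. Moreover, the same four inequalities hold with M_r replaced by M_{r'}. -/
/-- The partial sum `Σ_w(i, n) = w(i) + w(i+1) + ⋯ + w(i+n−1)`. -/
def pSum (w : ℕ → ℤ) (i n : ℕ) : ℤ := ∑ j ∈ Finset.range n, w (i + j)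

/-- Prefix sums. -/
def prefSum (w : ℕ → ℤ) (n : ℕ) : ℤ := ∑ j ∈ Finset.range n, w j

lemma prefSum_succ (w : ℕ → ℤ) (n : ℕ) : prefSum w (n + 1) = prefSum w n + w n := by
  simp [prefSum, Finset.sum_range_succ]

lemma pSum_eq (w : ℕ → ℤ) (i n : ℕ) : pSum w i n = prefSum w (i + n) - prefSum w i := by
  simp [pSum, prefSum, Finset.sum_range_add]

/-- The local facts on the Rudin-Shapiro sequence used below; `t j = r (4 j + 3)`. -/
structure RS (r t F : ℕ → ℤ) : Prop where
  pm : ∀ n, r n = 1 ∨ r n = -1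
  tpm : ∀ n, t n = 1 ∨ t n = -1
  te : ∀ n, t (2 * n) = - r (2 * n)
  tod : ∀ n, t (2 * n + 1) = r (2 * n + 1)
  r0 : ∀ n, r (4 * n) = r n
  r1 : ∀ n, r (4 * n + 1) = r n
  r2 : ∀ n, r (4 * n + 2) = - t n
  r3 : ∀ n, r (4 * n + 3) = t n
  Fz : F 0 = 0
  Fs : ∀ n, F (n + 1) = F n + r n
  F0 : ∀ n, F (4 * n) = 2 * F n
  F1 : ∀ n, F (4 * n + 1) = 2 * F n + r n
  F2 : ∀ n, F (4 * n + 2) = 2 * F n + 2 * r n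
  F3 : ∀ n, F (4 * n + 3) = 2 * F n + 2 * r n - t n

lemma rs_of (r : ℕ → ℤ) (hr0 : r 0 = 1)
    (hre : ∀ n, r (2 * n) = r n)
    (hro : ∀ n, r (2 * n + 1) = (-1) ^ n * r n) :
    RS r (fun j => r (4 * j + 3)) (prefSum r) := by
  have pm : ∀ n, r n = 1 ∨ r n = -1 := by
    intro n
    induction n using Nat.strong_induction_on with
    | _ n ih =>
      rcases Nat.even_or_odd' n with ⟨k, rfl | rfl⟩
      · rcases Nat.eq_zero_or_pos k with rfl | hk
        · left; simpa using hr0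
        · rw [hre]; exact ih k (by omega)
      · rw [hro]
        rcases neg_one_pow_eq_or ℤ k with h | h <;> rcases ih k (by omega) with h' | h' <;>
          simp [h, h']
  have r0 : ∀ n, r (4 * n) = r n := fun n => by
    rw [show 4 * n = 2 * (2 * n) by ring, hre, hre]
  have r1 : ∀ n, r (4 * n + 1) = r n := fun n => by
    rw [show 4 * n + 1 = 2 * (2 * n) + 1 by ring, hro, hre]; simp
  have r2 : ∀ n, r (4 * n + 2) = (-1) ^ n * r n := fun n => by
    rw [show 4 * n + 2 = 2 * (2 * n + 1) by ring, hre, hro]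
  have r3 : ∀ n, r (4 * n + 3) = - ((-1) ^ n * r n) := fun n => by
    rw [show 4 * n + 3 = 2 * (2 * n + 1) + 1 by ring, hro, hro]; simp [pow_succ]
  have F0 : ∀ n, prefSum r (4 * n) = 2 * prefSum r n := by
    intro n
    induction n with
    | zero => simp [prefSum]
    | succ k ih =>
      rw [show 4 * (k + 1) = 4 * k + 1 + 1 + 1 + 1 by ring]
      simp only [prefSum_succ, ih, r0, r1]
      have := r2 k
      have := r3 k
      linarith
  refine ⟨pm, fun n => pm _, ?_, ?_, r0, r1, ?_, fun n => rfl, by simp [prefSum],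
    prefSum_succ r, F0, ?_, ?_, ?_⟩
  · intro n; simp [r3]
  · intro n; simp [r3, pow_succ]
  · intro n; simp [r3, r2]
  · intro n; rw [prefSum_succ, F0, r0]
  · intro n
    rw [show 4 * n + 2 = 4 * n + 1 + 1 by ring, prefSum_succ, prefSum_succ, F0, r0, r1]; ring
  · intro n
    rw [show 4 * n + 3 = 4 * n + 1 + 1 + 1 by ring, prefSum_succ, prefSum_succ, prefSum_succ,
      F0, r0, r1]
    simp only [r2, r3]; ring

section
variable {r t F M : ℕ → ℤ}

lemma four_cases (p : ℕ) : ∃ i, p = 4 * i ∨ p = 4 * i + 1 ∨ p = 4 * i + 2 ∨ p = 4 * i + 3 :=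
  ⟨p / 4, by omega⟩

lemma ub0 (h : RS r t F) (ub : ∀ n i, F (i + n) - F i ≤ M n) (n p : ℕ) :
    F (p + 4 * n) - F p ≤ 2 * M n + 2 := by
  obtain ⟨i, rfl | rfl | rfl | rfl⟩ := four_cases p
  · rw [show 4 * i + 4 * n = 4 * (i + n) by ring]
    have := ub n i
    simp only [h.F0]; omega
  · rw [show 4 * i + 1 + 4 * n = 4 * (i + n) + 1 by ring]
    have := ub n i
    have := h.pm i
    have := h.pm (i + n)
    simp only [h.F1]; omega
  · rw [show 4 * i + 2 + 4 * n = 4 * (i + n) + 2 by ring]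
    have := ub n (i + 1)
    rw [show i + 1 + n = i + n + 1 by ring, h.Fs, h.Fs] at this
    simp only [h.F2]; omega
  · rw [show 4 * i + 3 + 4 * n = 4 * (i + n) + 3 by ring]
    have := ub n (i + 1)
    rw [show i + 1 + n = i + n + 1 by ring, h.Fs, h.Fs] at this
    have := h.tpm i
    have := h.tpm (i + n)
    simp only [h.F3]; omega

lemma ub1 (h : RS r t F) (ub : ∀ n i, F (i + n) - F i ≤ M n) (n p : ℕ) :
    F (p + (4 * n + 1)) - F p ≤ 2 * M n + 1 := by
  obtain ⟨i, hp⟩ := four_cases p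
  have a1 := ub n i
  have a2 := ub n (i + 1)
  rw [show i + 1 + n = i + n + 1 by ring, h.Fs, h.Fs] at a2
  have := h.pm i
  have := h.pm (i + n)
  have := h.tpm i
  have := h.tpm (i + n)
  rcases hp with rfl | rfl | rfl | rfl
  · rw [show 4 * i + (4 * n + 1) = 4 * (i + n) + 1 by ring, h.F1, h.F0]; omega
  · rw [show 4 * i + 1 + (4 * n + 1) = 4 * (i + n) + 2 by ring, h.F1, h.F2]; omega
  · rw [show 4 * i + 2 + (4 * n + 1) = 4 * (i + n) + 3 by ring, h.F2, h.F3]; omega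
  · rw [show 4 * i + 3 + (4 * n + 1) = 4 * (i + n + 1) by ring, h.F3, h.F0, h.Fs]; omega

lemma ub3 (h : RS r t F) (ub : ∀ n i, F (i + n) - F i ≤ M n) (n p : ℕ) :
    F (p + (4 * n + 3)) - F p ≤ 2 * M (n + 1) + 1 := by
  obtain ⟨i, hp⟩ := four_cases p
  have a1 := ub (n + 1) i
  rw [show i + (n + 1) = i + n + 1 by ring, h.Fs] at a1
  have a2 := ub (n + 1) (i + 1)
  rw [show i + 1 + (n + 1) = i + n + 1 + 1 by ring, h.Fs, h.Fs, h.Fs] at a2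
  have := h.pm i
  have := h.pm (i + n)
  have := h.pm (i + n + 1)
  have := h.tpm i
  have := h.tpm (i + n)
  rcases hp with rfl | rfl | rfl | rfl
  · rw [show 4 * i + (4 * n + 3) = 4 * (i + n) + 3 by ring, h.F3, h.F0]; omega
  · rw [show 4 * i + 1 + (4 * n + 3) = 4 * (i + n + 1) by ring, h.F1, h.F0, h.Fs]; omega
  · rw [show 4 * i + 2 + (4 * n + 3) = 4 * (i + n + 1) + 1 by ring, h.F2, h.F1, h.Fs]; omega
  · rw [show 4 * i + 3 + (4 * n + 3) = 4 * (i + n + 1) + 2 by ring, h.F3, h.F2, h.Fs]; omega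

lemma ub2 (h : RS r t F) (ub : ∀ n i, F (i + n) - F i ≤ M n) (n p : ℕ) :
    F (p + (4 * n + 2)) - F p ≤ M n + M (n + 1) + 1 ∨
    F (p + (4 * n + 2)) - F p ≤ 2 * M n ∨ F (p + (4 * n + 2)) - F p ≤ 2 * M (n + 1) := by
  obtain ⟨i, hp⟩ := four_cases p
  have a1 := ub (n + 1) i
  rw [show i + (n + 1) = i + n + 1 by ring, h.Fs] at a1
  have a2 := ub n (i + 1)
  rw [show i + 1 + n = i + n + 1 by ring, h.Fs, h.Fs] at a2
  have a3 := ub (n + 1) (i + 1)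
  rw [show i + 1 + (n + 1) = i + n + 1 + 1 by ring, h.Fs, h.Fs, h.Fs] at a3
  have := h.pm i
  have := h.pm (i + n)
  have := h.tpm i
  have := h.tpm (i + n)
  rcases hp with rfl | rfl | rfl | rfl
  · rw [show 4 * i + (4 * n + 2) = 4 * (i + n) + 2 by ring, h.F2, h.F0]; omega
  · rw [show 4 * i + 1 + (4 * n + 2) = 4 * (i + n) + 3 by ring, h.F1, h.F3]; omega
  · rw [show 4 * i + 2 + (4 * n + 2) = 4 * (i + n + 1) by ring, h.F2, h.F0, h.Fs]; omega
  · rw [show 4 * i + 3 + (4 * n + 2) = 4 * (i + n + 1) + 1 by ring, h.F3, h.F1, h.Fs]; omega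

/-- Parity of prefix sums. -/
lemma par (h : RS r t F) (n : ℕ) : (F n - n) % 2 = 0 := by
  induction n with
  | zero => simp [h.Fz]
  | succ k ih => have := h.pm k; have := h.Fs k; push_cast; omega

/-- Consecutive maxima differ by exactly one. -/
lemma step (h : RS r t F) (ub : ∀ n i, F (i + n) - F i ≤ M n)
    (at' : ∀ n, ∃ i, F (i + n) - F i = M n) (n : ℕ) :
    M (n + 1) = M n + 1 ∨ M n = M (n + 1) + 1 := by
  obtain ⟨i, hi⟩ := at' n
  obtain ⟨k, hk⟩ := at' (n + 1)
  have a1 := ub (n + 1) i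
  have a2 := ub n k
  have p1 := par h (i + n)
  have p2 := par h i
  have p3 := par h (k + (n + 1))
  have p4 := par h k
  push_cast at p1 p3
  rw [show i + (n + 1) = i + n + 1 by ring, h.Fs] at a1
  rw [show k + (n + 1) = k + n + 1 by ring, h.Fs] at hk p3
  have := h.pm (i + n)
  have := h.pm (k + n)
  omega

/-- A maximal window with favourable boundary. -/
def Good (t F M : ℕ → ℤ) (n : ℕ) : Prop :=
  ∃ j, F (j + 1 + n) - F (j + 1) = M n ∧ t j = 1 ∧ t (j + n) = -1

lemma good_mk (ub : ∀ n i, F (i + n) - F i ≤ M n)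
    (at' : ∀ n, ∃ i, F (i + n) - F i = M n) (N : ℕ) (j : ℕ)
    (hV : ∀ p, F (p + N) - F p ≤ F (j + 1 + N) - F (j + 1)) (h1 : t j = 1)
    (h2 : t (j + N) = -1) : Good t F M N := by
  obtain ⟨i, hi⟩ := at' N
  exact ⟨j, le_antisymm (ub _ _) (hi ▸ hV i), h1, h2⟩

lemma good_all (h : RS r t F) (h1 : r 1 = 1) (h2 : r 2 = 1)
    (ub : ∀ n i, F (i + n) - F i ≤ M n)
    (at' : ∀ n, ∃ i, F (i + n) - F i = M n) (N : ℕ) (hN : 1 ≤ N) : Good t F M N := by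
  induction N using Nat.strong_induction_on with
  | _ N ih =>
  obtain ⟨n, rfl | rfl | rfl | rfl⟩ := four_cases N
  · obtain ⟨j, e, b1, b2⟩ := ih n (by omega) (by omega)
    rw [show j + 1 + n = j + n + 1 by ring, h.Fs, h.Fs] at e
    refine good_mk ub at' _ (4 * j + 2) (fun p => (ub0 h ub n p).trans ?_) ?_ ?_
    · rw [show 4 * j + 2 + 1 + 4 * n = 4 * (j + n) + 3 by ring, h.F3, h.F3]; omega
    · rw [show 4 * j + 2 = 2 * (2 * j + 1) by ring, h.te,
        show 2 * (2 * j + 1) = 4 * j + 2 by ring, h.r2]; omega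
    · rw [show 4 * j + 2 + 4 * n = 2 * (2 * (j + n) + 1) by ring, h.te,
        show 2 * (2 * (j + n) + 1) = 4 * (j + n) + 2 by ring, h.r2]; omega
  · rcases Nat.eq_zero_or_pos n with rfl | hn
    · refine good_mk ub at' _ 1 (fun p => ?_) ?_ ?_
      · simp only [mul_zero, zero_add, h.Fs, h2]
        have := h.pm p
        omega
      · rw [show 1 = 2 * 0 + 1 by ring, h.tod]; exact h1
      · rw [show 1 + (4 * 0 + 1) = 2 * 1 by ring, h.te]; simp [h2]
    · obtain ⟨j, e, b1, b2⟩ := ih n (by omega) (by omega)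
      rw [show j + 1 + n = j + n + 1 by ring, h.Fs, h.Fs] at e
      refine good_mk ub at' _ (4 * j + 2) (fun p => (ub1 h ub n p).trans ?_) ?_ ?_
      · rw [show 4 * j + 2 + 1 + (4 * n + 1) = 4 * (j + n + 1) by ring, h.F3, h.F0, h.Fs]; omega
      · rw [show 4 * j + 2 = 2 * (2 * j + 1) by ring, h.te,
          show 2 * (2 * j + 1) = 4 * j + 2 by ring, h.r2]; omega
      · rw [show 4 * j + 2 + (4 * n + 1) = 2 * (2 * (j + n) + 1) + 1 by ring, h.tod,
          show 2 * (2 * (j + n) + 1) + 1 = 4 * (j + n) + 3 by ring, h.r3]; omega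
  · have hs := step h ub at' n
    have hub := ub2 h ub n
    rcases hs with hs | hs
    · obtain ⟨j, e, b1, b2⟩ := ih (n + 1) (by omega) (by omega)
      rw [show j + (n + 1) = j + n + 1 by ring] at b2
      rw [show j + 1 + (n + 1) = j + n + 1 + 1 by ring, h.Fs, h.Fs, h.Fs] at e
      rcases h.pm (j + n + 1) with c | c
      · refine good_mk ub at' _ (4 * j + 2) (fun p => ?_) ?_ ?_
        · have := hub p
          rw [show 4 * j + 2 + 1 + (4 * n + 2) = 4 * (j + n + 1) + 1 by ring, h.F3, h.F1, h.Fs]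
          omega
        · rw [show 4 * j + 2 = 2 * (2 * j + 1) by ring, h.te,
            show 2 * (2 * j + 1) = 4 * j + 2 by ring, h.r2]; omega
        · rw [show 4 * j + 2 + (4 * n + 2) = 2 * (2 * (j + n + 1)) by ring, h.te,
            show 2 * (2 * (j + n + 1)) = 4 * (j + n + 1) by ring, h.r0]; omega
      · refine good_mk ub at' _ (4 * j + 3) (fun p => ?_) ?_ ?_
        · have := hub p
          rw [show 4 * j + 3 + 1 + (4 * n + 2) = 4 * (j + n + 1) + 2 by ring,
            show 4 * j + 3 + 1 = 4 * (j + 1) by ring, h.F2, h.F0, h.Fs, h.Fs]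
          omega
        · rw [show 4 * j + 3 = 2 * (2 * j + 1) + 1 by ring, h.tod,
            show 2 * (2 * j + 1) + 1 = 4 * j + 3 by ring, h.r3]; omega
        · rw [show 4 * j + 3 + (4 * n + 2) = 2 * (2 * (j + n + 1)) + 1 by ring, h.tod,
            show 2 * (2 * (j + n + 1)) + 1 = 4 * (j + n + 1) + 1 by ring, h.r1]; omega
    · rcases Nat.eq_zero_or_pos n with rfl | hn
      · exfalso
        obtain ⟨i, hi⟩ := at' 0
        have a := ub 1 1
        have b := h.Fs 1
        simp at hi hs
        norm_num at a b
        omega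
      obtain ⟨j, e, b1, b2⟩ := ih n (by omega) (by omega)
      have e' := ub (n + 1) (j + 1)
      rw [show j + 1 + (n + 1) = j + n + 1 + 1 by ring, h.Fs, h.Fs, h.Fs] at e'
      rw [show j + 1 + n = j + n + 1 by ring, h.Fs, h.Fs] at e
      rcases h.pm j with c | c
      · refine good_mk ub at' _ (4 * j + 1) (fun p => ?_) ?_ ?_
        · have := hub p
          rw [show 4 * j + 1 + 1 + (4 * n + 2) = 4 * (j + n + 1) by ring, h.F2, h.F0, h.Fs]
          omega
        · rw [show 4 * j + 1 = 2 * (2 * j) + 1 by ring, h.tod,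
            show 2 * (2 * j) + 1 = 4 * j + 1 by ring, h.r1]; omega
        · rw [show 4 * j + 1 + (4 * n + 2) = 2 * (2 * (j + n) + 1) + 1 by ring, h.tod,
            show 2 * (2 * (j + n) + 1) + 1 = 4 * (j + n) + 3 by ring, h.r3]; omega
      · refine good_mk ub at' _ (4 * j) (fun p => ?_) ?_ ?_
        · have := hub p
          rw [show 4 * j + 1 + (4 * n + 2) = 4 * (j + n) + 3 by ring, h.F3, h.F1]
          omega
        · rw [show 4 * j = 2 * (2 * j) by ring, h.te,
            show 2 * (2 * j) = 4 * j by ring, h.r0]; omega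
        · rw [show 4 * j + (4 * n + 2) = 2 * (2 * (j + n) + 1) by ring, h.te,
            show 2 * (2 * (j + n) + 1) = 4 * (j + n) + 2 by ring, h.r2]; omega
  · obtain ⟨j, e, b1, b2⟩ := ih (n + 1) (by omega) (by omega)
    rw [show j + (n + 1) = j + n + 1 by ring] at b2
    rw [show j + 1 + (n + 1) = j + n + 1 + 1 by ring, h.Fs, h.Fs, h.Fs] at e
    refine good_mk ub at' _ (4 * j + 3) (fun p => (ub3 h ub n p).trans ?_) ?_ ?_
    · rw [show 4 * j + 3 + 1 + (4 * n + 3) = 4 * (j + n + 1) + 3 by ring,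
        show 4 * j + 3 + 1 = 4 * (j + 1) by ring, h.F3, h.F0, h.Fs, h.Fs]; omega
    · rw [show 4 * j + 3 = 2 * (2 * j + 1) + 1 by ring, h.tod,
        show 2 * (2 * j + 1) + 1 = 4 * j + 3 by ring, h.r3]; omega
    · rw [show 4 * j + 3 + (4 * n + 3) = 2 * (2 * (j + n + 1) + 1) by ring, h.te,
        show 2 * (2 * (j + n + 1) + 1) = 4 * (j + n + 1) + 2 by ring, h.r2]; omega

/-- The four inequalities for `r`. -/
lemma main_r (h : RS r t F) (h1 : r 1 = 1) (h2 : r 2 = 1)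
    (ub : ∀ n i, F (i + n) - F i ≤ M n)
    (at' : ∀ n, ∃ i, F (i + n) - F i = M n) (n : ℕ) (hn : 1 ≤ n) :
    M (4 * n) ≥ 2 * M n + 2 ∧
     M (4 * n + 1) ≥ 2 * M n + 1 ∧
     M (4 * n + 2) ≥ M n + M (n + 1) + 1 ∧
     M (4 * n + 3) ≥ 2 * M (n + 1) + 1 := by
  obtain ⟨j, e, b1, b2⟩ := good_all h h1 h2 ub at' n hn
  obtain ⟨k, e', c1, c2⟩ := good_all h h1 h2 ub at' (n + 1) (by omega)
  rw [show j + 1 + n = j + n + 1 by ring, h.Fs, h.Fs] at e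
  rw [← add_assoc] at c2
  rw [show k + 1 + (n + 1) = k + n + 1 + 1 by ring, h.Fs, h.Fs, h.Fs] at e'
  refine ⟨?_, ?_, ?_, ?_⟩
  · have := ub (4 * n) (4 * j + 3)
    rw [show 4 * j + 3 + 4 * n = 4 * (j + n) + 3 by ring, h.F3, h.F3] at this
    omega
  · have := ub (4 * n + 1) (4 * j + 3)
    rw [show 4 * j + 3 + (4 * n + 1) = 4 * (j + n + 1) by ring, h.F3, h.F0, h.Fs] at this
    omega
  · have a := ub (4 * n + 2) (4 * (k + 1))
    rw [show 4 * (k + 1) + (4 * n + 2) = 4 * (k + n + 1) + 2 by ring, h.F2, h.F0, h.Fs, h.Fs] at a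
    have b := ub (4 * n + 2) (4 * j + 2)
    rw [show 4 * j + 2 + (4 * n + 2) = 4 * (j + n + 1) by ring, h.F2, h.F0, h.Fs] at b
    have := step h ub at' n
    omega
  · have a := ub (4 * n + 3) (4 * (k + 1))
    rw [show 4 * (k + 1) + (4 * n + 3) = 4 * (k + n + 1) + 3 by ring, h.F3, h.F0, h.Fs, h.Fs] at a
    omega

end

/-- Reversal symmetry between `r` and `r'`, with either sign. -/
lemma reversal (r : ℕ → ℤ) (hr0 : r 0 = 1)
    (hre : ∀ n, r (2 * n) = r n)
    (hro : ∀ n, r (2 * n + 1) = (-1) ^ n * r n) (k : ℕ) :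
    ∀ ε : ℤ, ε = 1 ∨ ε = -1 → ∃ m, Even m ∧ ∀ x y, x + y + 1 = 2 ^ (k + 1) →
      r (m + y) = ε * ((-1) ^ x * r x) := by
  have h1 : r 1 = 1 := by simpa [hr0] using hro 0
  have h2 : r 2 = 1 := by simpa [h1] using hre 1
  have h3 : r 3 = -1 := by simpa [h1] using hro 1
  have h6 : r 6 = -1 := by simpa [h3] using hre 3
  have h7 : r 7 = 1 := by
    have := hro 3
    norm_num [h3] at this
    exact this
  induction k with
  | zero =>
    rintro ε (rfl | rfl)
    · refine ⟨6, by decide, fun x y hxy => ?_⟩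
      have : x = 0 ∧ y = 1 ∨ x = 1 ∧ y = 0 := by omega
      rcases this with ⟨rfl, rfl⟩ | ⟨rfl, rfl⟩ <;> simp [*]
    · refine ⟨2, by decide, fun x y hxy => ?_⟩
      have : x = 0 ∧ y = 1 ∨ x = 1 ∧ y = 0 := by omega
      rcases this with ⟨rfl, rfl⟩ | ⟨rfl, rfl⟩ <;> simp [*]
  | succ k ih =>
    intro ε hε
    obtain ⟨m, hm, H⟩ := ih (-ε) (by omega)
    refine ⟨2 * m, by simp, fun x y hxy => ?_⟩
    rw [pow_succ] at hxy
    rcases Nat.even_or_odd' x with ⟨a, rfl | rfl⟩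
    · obtain ⟨b, rfl⟩ : ∃ b, y = 2 * b + 1 := ⟨(y - 1) / 2, by omega⟩
      have hab : a + b + 1 = 2 ^ (k + 1) := by omega
      have hodd : (-1 : ℤ) ^ b * (-1) ^ a = -1 := by
        rw [← pow_add]
        apply Odd.neg_one_pow
        rw [pow_succ] at hab
        exact ⟨2 ^ k - 1, by omega⟩
      rw [show 2 * m + (2 * b + 1) = 2 * (m + b) + 1 by ring, hro, H a b hab, hre, pow_add,
        hm.neg_one_pow, pow_mul]
      linear_combination (-ε * r a) * hodd
    · obtain ⟨b, rfl⟩ : ∃ b, y = 2 * b := ⟨y / 2, by omega⟩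
      have hab : a + b + 1 = 2 ^ (k + 1) := by omega
      rw [show 2 * m + 2 * b = 2 * (m + b) by ring, hre, H a b hab, hro, pow_succ, pow_mul]
      simp

/-- Reversed sums. -/
lemma pSum_rev (u v : ℕ → ℤ) (i c n : ℕ)
    (H : ∀ j, j < n → u (i + j) = v (c + (n - 1 - j))) : pSum u i n = pSum v c n := by
  unfold pSum
  rw [← Finset.sum_range_reflect (fun j => v (c + j)) n]
  exact Finset.sum_congr rfl fun j hj => H j (Finset.mem_range.1 hj)

lemma M_eq (r : ℕ → ℤ) (hr0 : r 0 = 1)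
    (hre : ∀ n, r (2 * n) = r n)
    (hro : ∀ n, r (2 * n + 1) = (-1) ^ n * r n)
    (M M' : ℕ → ℤ)
    (hM : ∀ n, IsGreatest (Set.range fun i => pSum r i n) (M n))
    (hM' : ∀ n, IsGreatest (Set.range fun i => pSum (fun k => (-1) ^ k * r k) i n) (M' n)) :
    M' = M := by
  have key : ∀ i n : ℕ, i + n ≤ 2 ^ (i + n + 1) := fun i n =>
    ((Nat.lt_two_pow_self).trans (Nat.pow_lt_pow_right (by norm_num) (Nat.lt_succ_self _))).le
  funext n
  apply le_antisymm
  · obtain ⟨i, hi⟩ := (hM' n).1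
    simp only at hi
    obtain ⟨m, hm, H⟩ := reversal r hr0 hre hro (i + n) 1 (Or.inl rfl)
    have hk := key i n
    rw [← hi, pSum_rev _ r i (m + (2 ^ (i + n + 1) - (i + n))) n]
    · exact (hM n).2 ⟨_, rfl⟩
    · intro j hj
      have := H (i + j) (2 ^ (i + n + 1) - (i + n) + (n - 1 - j)) (by omega)
      rw [add_assoc, this, one_mul]
  · obtain ⟨i, hi⟩ := (hM n).1
    simp only at hi
    obtain ⟨m, hm, H⟩ := reversal r hr0 hre hro (i + n) (-1) (Or.inr rfl)
    have hk := key i n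
    rw [← hi, pSum_rev r (fun k => (-1) ^ k * r k) i (m + (2 ^ (i + n + 1) - (i + n))) n]
    · exact (hM' n).2 ⟨_, rfl⟩
    · intro j hj
      have hs : i + j + (2 ^ (i + n + 1) - (i + n) + (n - 1 - j)) + 1 = 2 ^ (i + n + 1) := by
        omega
      have := H (i + j) _ hs
      rw [add_assoc, this, pow_add, hm.neg_one_pow]
      have hodd : (-1 : ℤ) ^ (2 ^ (i + n + 1) - (i + n) + (n - 1 - j)) * (-1) ^ (i + j) = -1 := by
        rw [← pow_add]
        apply Odd.neg_one_pow
        rw [pow_succ] at hs ⊢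
        exact ⟨2 ^ (i + n) - 1, by omega⟩
      linear_combination (r (i + j)) * hodd

/-- **Statement.** Bounds for the maximal sums of consecutive terms of the
Rudin–Shapiro sequence `r` and of the related sequence `r'(n) = (−1)^n r(n)`. -/
theorem max_sum_lower_bounds
    (r : ℕ → ℤ) (hr0 : r 0 = 1)
    (hre : ∀ n, r (2 * n) = r n)
    (hro : ∀ n, r (2 * n + 1) = (-1) ^ n * r n)
    (M M' : ℕ → ℤ)
    (hM : ∀ n, IsGreatest (Set.range fun i => pSum r i n) (M n))
    (hM' : ∀ n, IsGreatest (Set.range fun i => pSum (fun k => (-1) ^ k * r k) i n) (M' n))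
    (n : ℕ) (hn : 1 ≤ n) :
    (M (4 * n) ≥ 2 * M n + 2 ∧
     M (4 * n + 1) ≥ 2 * M n + 1 ∧
     M (4 * n + 2) ≥ M n + M (n + 1) + 1 ∧
     M (4 * n + 3) ≥ 2 * M (n + 1) + 1) ∧
    (M' (4 * n) ≥ 2 * M' n + 2 ∧
     M' (4 * n + 1) ≥ 2 * M' n + 1 ∧
     M' (4 * n + 2) ≥ M' n + M' (n + 1) + 1 ∧
     M' (4 * n + 3) ≥ 2 * M' (n + 1) + 1) := by
  have h1 : r 1 = 1 := by simpa [hr0] using hro 0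
  have h2 : r 2 = 1 := by simpa [h1] using hre 1
  have hMM := M_eq r hr0 hre hro M M' hM hM'
  subst hMM
  have := main_r (M := M') (rs_of r hr0 hre hro) h1 h2
    (fun n i => by rw [← pSum_eq]; exact (hM n).2 ⟨i, rfl⟩)
    (fun n => by
      obtain ⟨i, hi⟩ := (hM n).1
      exact ⟨i, by rw [← pSum_eq]; exact hi⟩) n hn
  exact ⟨this, this⟩
end

section
/- For every n ≥ 1, the abelian complexity of the Rudin-Shapiro sequence r equals the abelian complexity of the related sequence r': ρ_r(n) = ρ_{r'}(n). -/
/-- The Parikh (abelianization) vector of the factor of `w` of length `n`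
starting at position `i`. -/
def parikh (w : ℕ → ℤ) (n i : ℕ) : ℤ → ℕ :=
  fun a => ((Finset.range n).filter fun j => w (i + j) = a).card

/-- The abelian complexity of `w`: the number of abelian equivalence classes
of factors of `w` of length `n`. -/
noncomputable def abelianComplexity (w : ℕ → ℤ) (n : ℕ) : ℕ :=
  (Set.range (parikh w n)).ncard

theorem rs_reflect (r : ℕ → ℤ)
    (hre : ∀ n, r (2 * n) = r n)
    (hro : ∀ n, r (2 * n + 1) = (-1) ^ n * r n) (k : ℕ) :
    ∀ n m, n < 2 ^ k → n + m + 1 = 2 ^ (k + 1) → r m = (-1) ^ k * ((-1) ^ n * r n) := by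
  induction k with
  | zero =>
    intro n m hn hm
    have h0 : n = 0 := by simpa using hn
    subst h0
    have h1 : m = 2 * 0 + 1 := by norm_num at hm; omega
    rw [h1, hro]
    simp
  | succ k ih =>
    intro n m hn hm
    have e1 : 2 ^ (k + 1 + 1) = 2 * 2 ^ (k + 1) := by ring
    have e2 : 2 ^ (k + 1) = 2 * 2 ^ k := by ring
    rcases Nat.even_or_odd' n with ⟨a, rfl | rfl⟩
    · obtain ⟨b, rfl⟩ : ∃ b, m = 2 * b + 1 := ⟨m / 2, by omega⟩
      have h := ih a b (by omega) (by omega)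
      have hodd : Odd (b + a) := ⟨2 ^ k - 1, by omega⟩
      have hs : (-1 : ℤ) ^ b * (-1) ^ a = -1 := by rw [← pow_add]; exact hodd.neg_one_pow
      rw [hro, hre, h, pow_mul, pow_succ]
      norm_num
      linear_combination ((-1) ^ k * r a) * hs
    · obtain ⟨b, rfl⟩ : ∃ b, m = 2 * b := ⟨m / 2, by omega⟩
      have h := ih a b (by omega) (by omega)
      rw [hro, hre, h, pow_succ, pow_succ, pow_mul]
      norm_num

theorem parikh_reflect (w v : ℕ → ℤ) (n i i' : ℕ)
    (h : ∀ j, j < n → w (i + j) = v (i' + (n - 1 - j))) : parikh w n i = parikh v n i' := by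
  funext a
  unfold parikh
  refine Finset.card_nbij' (fun j => n - 1 - j) (fun j => n - 1 - j) ?_ ?_ ?_ ?_
  · intro j hj
    simp only [Finset.coe_filter, Finset.mem_range, Set.mem_setOf_eq] at hj ⊢
    exact ⟨by omega, by rw [← h j hj.1]; exact hj.2⟩
  · intro j hj
    simp only [Finset.coe_filter, Finset.mem_range, Set.mem_setOf_eq] at hj ⊢
    refine ⟨by omega, ?_⟩
    rw [h _ (by omega), show n - 1 - (n - 1 - j) = j by omega]
    exact hj.2
  · intro j hj
    simp only [Finset.coe_filter, Finset.mem_range, Set.mem_setOf_eq] at hj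
    simp only
    omega
  · intro j hj
    simp only [Finset.coe_filter, Finset.mem_range, Set.mem_setOf_eq] at hj
    simp only
    omega

/-- For every `n ≥ 1`, the abelian complexity of the
Rudin–Shapiro sequence `r` equals the abelian complexity of the related
sequence `r'(n) = (−1)^n r(n)`. -/
theorem abelianComplexity_rs_eq_rs'
    (r : ℕ → ℤ) (hr0 : r 0 = 1)
    (hre : ∀ n, r (2 * n) = r n)
    (hro : ∀ n, r (2 * n + 1) = (-1) ^ n * r n)
    (n : ℕ) (hn : 1 ≤ n) :
    abelianComplexity r n = abelianComplexity (fun k => (-1) ^ k * r k) n := by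
  unfold abelianComplexity
  congr 1
  apply Set.Subset.antisymm
  · rintro _ ⟨i, rfl⟩
    obtain ⟨k, hk, hlt⟩ : ∃ k, Odd k ∧ i + n < 2 ^ k :=
      ⟨2 * (i + n) + 1, ⟨_, rfl⟩,
        lt_of_lt_of_le (Nat.lt_two_pow_self) (Nat.pow_le_pow_right (by norm_num) (by omega))⟩
    have e : 2 ^ (k + 1) = 2 * 2 ^ k := by ring
    refine ⟨2 ^ (k + 1) - i - n, (parikh_reflect _ _ _ _ _ ?_).symm⟩
    intro j hj
    obtain ⟨m, hm⟩ : ∃ m, 2 ^ (k + 1) - i - n + (n - 1 - j) = m := ⟨_, rfl⟩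
    have h := rs_reflect r hre hro k (i + j) m (by omega) (by omega)
    have hodd : Odd (m + (i + j)) := ⟨2 ^ k - 1, by omega⟩
    have hs : (-1 : ℤ) ^ m * (-1) ^ (i + j) = -1 := by rw [← pow_add]; exact hodd.neg_one_pow
    simp only [hm]
    rw [h, hk.neg_one_pow]
    linear_combination (r (i + j)) * hs
  · rintro _ ⟨i, rfl⟩
    obtain ⟨k, hk, hlt⟩ : ∃ k, Even k ∧ i + n < 2 ^ k :=
      ⟨2 * (i + n), even_two_mul _,
        lt_of_lt_of_le (Nat.lt_two_pow_self) (Nat.pow_le_pow_right (by norm_num) (by omega))⟩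
    have e : 2 ^ (k + 1) = 2 * 2 ^ k := by ring
    refine ⟨2 ^ (k + 1) - i - n, (parikh_reflect _ _ _ _ _ ?_).symm⟩
    intro j hj
    have h := rs_reflect r hre hro k (i + j) (2 ^ (k + 1) - i - n + (n - 1 - j))
      (by omega) (by omega)
    rw [h, hk.neg_one_pow, one_mul]
end
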